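/- For all integers x, y ≥ 2 and j, k ≥ 0, the quantities ε_i^R satisfy ε_{2(x−2)(y−1)+jx+ky}^R ≤ max( 2·ε_j^R / x , ε_k^R / y ). -/

import Mathlib

/-- An axis-parallel rectangle in ℝ²: a product of closed intervals. -/
def IsRect (R : Set (EuclideanSpace ℝ (Fin 2))) : Prop :=
  ∃ a b c d : ℝ, R = {x | a ≤ x 0 ∧ x 0 ≤ b ∧ c ≤ x 1 ∧ x 1 ≤ d}

/-- `Q` is a strong ε-net of `P` with respect to axis-parallel rectangles. -/
def IsRectNet (P Q : Finset (EuclideanSpace ℝ (Fin 2))) (ε : ℝ) : Prop :=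
  Q ⊆ P ∧ ∀ R : Set (EuclideanSpace ℝ (Fin 2)), IsRect R →
    ε * P.card < ((R ∩ ↑P).ncard : ℝ) → ∃ q ∈ Q, q ∈ R

/-- `epsR i` is the infimum of the ε ∈ [0,1] such that every finite planar point set
admits a strong ε-net of size at most `i` with respect to axis-parallel rectangles. -/
noncomputable def epsR (i : ℕ) : ℝ :=
  sInf {ε : ℝ | ε ∈ Set.Icc (0 : ℝ) 1 ∧
    ∀ P : Finset (EuclideanSpace ℝ (Fin 2)),
      ∃ Q : Finset (EuclideanSpace ℝ (Fin 2)), Q.card ≤ i ∧ IsRectNet P Q ε}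

/-- The set of admissible `ε` for nets of size `i`. -/
def RGood (i : ℕ) (ε : ℝ) : Prop :=
  ε ∈ Set.Icc (0 : ℝ) 1 ∧
    ∀ P : Finset (EuclideanSpace ℝ (Fin 2)),
      ∃ Q : Finset (EuclideanSpace ℝ (Fin 2)), Q.card ≤ i ∧ IsRectNet P Q ε

open Classical in
/-- Transfer of nets to abstract index types with injective ranks. -/
lemma RGood.pull {j : ℕ} {ε : ℝ} (h : RGood j ε) {ι : Type} {M : ℕ}
    (f g : ι → Fin M) (hf : Function.Injective f) (S : Finset ι) :
    ∃ Q : Finset ι, Q.card ≤ j ∧ ∀ A B : Set (Fin M), A.OrdConnected → B.OrdConnected →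
      ε * S.card < ((S.filter (fun i => f i ∈ A ∧ g i ∈ B)).card : ℝ) →
      ∃ q ∈ Q, f q ∈ A ∧ g q ∈ B := by
  let e : ι → EuclideanSpace ℝ (Fin 2) := fun i => !₂[((f i : ℕ) : ℝ), ((g i : ℕ) : ℝ)]
  have e0 : ∀ i, e i 0 = ((f i : ℕ) : ℝ) := fun i => by simp [e]
  have e1 : ∀ i, e i 1 = ((g i : ℕ) : ℝ) := fun i => by simp [e]
  have he : Function.Injective e := by
    intro i i' hi
    have h0 : e i 0 = e i' 0 := by rw [hi]
    rw [e0, e0] at h0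
    exact hf (Fin.ext (Nat.cast_injective h0))
  obtain ⟨Q, hQc, hQP, hQ⟩ := h.2 (S.image e)
  have hsub : ∃ Q' : Finset ι, Q' ⊆ S ∧ Q'.image e = Q := by
    obtain ⟨Q', h1, h2⟩ := Finset.subset_image_iff.mp hQP
    exact ⟨Q', by exact_mod_cast h1, h2⟩
  obtain ⟨Q', hQ'S, rfl⟩ := hsub
  refine ⟨Q', by rwa [Finset.card_image_of_injective _ he] at hQc, ?_⟩
  intro A B hA hB hlt
  set U := S.filter (fun i => f i ∈ A ∧ g i ∈ B) with hU
  have hne : U.Nonempty := by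
    rw [← Finset.card_pos]
    have : (0 : ℝ) ≤ ε * S.card := mul_nonneg h.1.1 (Nat.cast_nonneg _)
    exact_mod_cast this.trans_lt hlt
  obtain ⟨a, ha, ha'⟩ := U.exists_min_image f hne
  obtain ⟨b, hb, hb'⟩ := U.exists_max_image f hne
  obtain ⟨c, hc, hc'⟩ := U.exists_min_image g hne
  obtain ⟨d, hd, hd'⟩ := U.exists_max_image g hne
  have key := hQ {z | ((f a : ℕ) : ℝ) ≤ z 0 ∧ z 0 ≤ ((f b : ℕ) : ℝ) ∧
    ((g c : ℕ) : ℝ) ≤ z 1 ∧ z 1 ≤ ((g d : ℕ) : ℝ)} ⟨_, _, _, _, rfl⟩ ?_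
  · obtain ⟨q, hq, hqR⟩ := key
    obtain ⟨i, hi, rfl⟩ := Finset.mem_image.mp hq
    simp only [Set.mem_ofPred_eq, e0, e1, Nat.cast_le, Fin.val_fin_le] at hqR
    rw [hU, Finset.mem_filter] at ha hb hc hd
    exact ⟨i, hi, hA.out ha.2.1 hb.2.1 ⟨hqR.1, hqR.2.1⟩,
      hB.out hc.2.2 hd.2.2 ⟨hqR.2.2.1, hqR.2.2.2⟩⟩
  · rw [Finset.card_image_of_injective _ he]
    refine hlt.trans_le ?_
    rw [← Finset.card_image_of_injective U he, ← Set.ncard_coe_finset]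
    apply Nat.cast_le.mpr
    apply Set.ncard_le_ncard
    · intro z hz
      simp only [Finset.coe_image, Set.mem_image, Finset.mem_coe] at hz
      obtain ⟨i, hi, rfl⟩ := hz
      refine ⟨?_, ?_⟩
      · simp only [Set.mem_ofPred_eq, e0, e1, Nat.cast_le, Fin.val_fin_le]
        exact ⟨ha' i hi, hb' i hi, hc' i hi, hd' i hi⟩
      · exact_mod_cast Finset.mem_image_of_mem e (Finset.mem_filter.mp hi).1
    · exact (Finset.finite_toSet _).subset Set.inter_subset_right

/-- The two points of a slab nearest to a horizontal line. -/
lemma exists_nearest {ι : Type} {M : ℕ} (g : ι → Fin M) (S : Finset ι) (L : ℕ) :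
    ∃ W : Finset ι, W.card ≤ 2 ∧ ∀ p ∈ S,
      (L ≤ (g p : ℕ) → ∃ q ∈ W, q ∈ S ∧ L ≤ (g q : ℕ) ∧ g q ≤ g p) ∧
      ((g p : ℕ) < L → ∃ q ∈ W, q ∈ S ∧ (g q : ℕ) < L ∧ g p ≤ g q) := by
  classical
  have h1 : ∃ W : Finset ι, W.card ≤ 1 ∧ ∀ p ∈ S,
      (L ≤ (g p : ℕ) → ∃ q ∈ W, q ∈ S ∧ L ≤ (g q : ℕ) ∧ g q ≤ g p) := by
    rcases (S.filter (fun p => L ≤ (g p : ℕ))).eq_empty_or_nonempty with h | h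
    · refine ⟨∅, by simp, fun p hp hL => ?_⟩
      have : p ∈ S.filter (fun p => L ≤ (g p : ℕ)) := by simp [hp, hL]
      simp [h] at this
    · obtain ⟨q, hq, hq'⟩ := Finset.exists_min_image _ g h
      rw [Finset.mem_filter] at hq
      exact ⟨{q}, by simp, fun p hp hL =>
        ⟨q, by simp, hq.1, hq.2, hq' p (by simp [hp, hL])⟩⟩
  have h2 : ∃ W : Finset ι, W.card ≤ 1 ∧ ∀ p ∈ S,
      ((g p : ℕ) < L → ∃ q ∈ W, q ∈ S ∧ (g q : ℕ) < L ∧ g p ≤ g q) := by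
    rcases (S.filter (fun p => (g p : ℕ) < L)).eq_empty_or_nonempty with h | h
    · refine ⟨∅, by simp, fun p hp hL => ?_⟩
      have : p ∈ S.filter (fun p => (g p : ℕ) < L) := by simp [hp, hL]
      simp [h] at this
    · obtain ⟨q, hq, hq'⟩ := Finset.exists_max_image _ g h
      rw [Finset.mem_filter] at hq
      exact ⟨{q}, by simp, fun p hp hL =>
        ⟨q, by simp, hq.1, hq.2, hq' p (by simp [hp, hL])⟩⟩
  obtain ⟨W1, c1, k1⟩ := h1
  obtain ⟨W2, c2, k2⟩ := h2
  refine ⟨W1 ∪ W2, (Finset.card_union_le _ _).trans (by omega), fun p hp => ⟨fun hL => ?_, fun hL => ?_⟩⟩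
  · obtain ⟨q, hq, h⟩ := k1 p hp hL
    exact ⟨q, Finset.mem_union_left _ hq, h⟩
  · obtain ⟨q, hq, h⟩ := k2 p hp hL
    exact ⟨q, Finset.mem_union_right _ hq, h⟩

/-- A slab of width `w` has at most `w` points. -/
lemma slab_card {ι : Type} [Fintype ι] {M : ℕ} (f : ι → Fin M) (hf : Function.Injective f)
    (w s : ℕ) (hw : 0 < w) :
    (Finset.univ.filter (fun i => (f i : ℕ) / w = s)).card ≤ w := by
  have := Finset.card_le_card_of_injOn (s := Finset.univ.filter (fun i => (f i : ℕ) / w = s))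
    (t := Finset.Ico (s * w) (s * w + w)) (fun i => (f i : ℕ)) ?_ ?_
  · simpa using this
  · intro i hi
    simp only [Finset.coe_filter, Finset.mem_univ, true_and, Set.mem_ofPred_eq] at hi
    have h1 := Nat.div_add_mod (f i : ℕ) w
    have h2 := Nat.mod_lt (f i : ℕ) hw
    rw [hi, mul_comm] at h1
    simp only [Finset.coe_Ico, Set.mem_Ico]
    omega
  · intro i _ i' _ h
    exact hf (Fin.ext h)

open Classical in
/-- The grid construction on a point set with distinct ranks. -/
lemma grid_core (x y j k n : ℕ) (hx : 2 ≤ x) (hy : 2 ≤ y) (hn : 0 < n)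
    (ε ε₁ ε₂ : ℝ) (h₁ : RGood j ε₁) (h₂ : RGood k ε₂)
    (he₁ : 2 * ε₁ ≤ ε * x) (he₂ : ε₂ ≤ ε * y)
    {ι : Type} [Fintype ι] (f g : ι → Fin (n * (x * y)))
    (hf : Function.Injective f) (hg : Function.Injective g) :
    ∃ T : Finset ι, T.card ≤ 2 * (x - 2) * (y - 1) + j * x + k * y ∧
      ∀ A B : Set (Fin (n * (x * y))), A.OrdConnected → B.OrdConnected →
      ε * (n * (x * y)) < ((Finset.univ.filter (fun i => f i ∈ A ∧ g i ∈ B)).card : ℝ) →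
      ∃ q ∈ T, f q ∈ A ∧ g q ∈ B := by
  have hny : 0 < n * y := by positivity
  have hnx : 0 < n * x := by positivity
  let V : ℕ → Finset ι := fun s => Finset.univ.filter (fun i => (f i : ℕ) / (n * y) = s)
  let H : ℕ → Finset ι := fun s => Finset.univ.filter (fun i => (g i : ℕ) / (n * x) = s)
  have hV : ∀ s, (V s).card ≤ n * y := fun s => slab_card f hf _ s hny
  have hH : ∀ s, (H s).card ≤ n * x := fun s => slab_card g hg _ s hnx
  have hfx : ∀ i, (f i : ℕ) / (n * y) < x := fun i => by
    rw [Nat.div_lt_iff_lt_mul hny]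
    calc (f i : ℕ) < n * (x * y) := (f i).2
      _ = x * (n * y) := by ring
  have hgy : ∀ i, (g i : ℕ) / (n * x) < y := fun i => by
    rw [Nat.div_lt_iff_lt_mul hnx]
    calc (g i : ℕ) < n * (x * y) := (g i).2
      _ = y * (n * x) := by ring
  choose Q₁ hQ₁c hQ₁ using fun s => h₁.pull f g hf (V s)
  choose Q₂ hQ₂c hQ₂ using fun s => h₂.pull f g hf (H s)
  choose W hWc hW using fun st : ℕ × ℕ => exists_nearest g (V st.1) (st.2 * (n * x))
  refine ⟨((Finset.Icc 1 (x - 2) ×ˢ Finset.Icc 1 (y - 1)).biUnion W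
    ∪ (Finset.range x).biUnion Q₁) ∪ (Finset.range y).biUnion Q₂, ?_, ?_⟩
  · have c1 := Finset.card_biUnion_le_card_mul (Finset.Icc 1 (x - 2) ×ˢ Finset.Icc 1 (y - 1)) W 2
      (fun s _ => hWc s)
    have c2 := Finset.card_biUnion_le_card_mul (Finset.range x) Q₁ j (fun s _ => hQ₁c s)
    have c3 := Finset.card_biUnion_le_card_mul (Finset.range y) Q₂ k (fun s _ => hQ₂c s)
    simp only [Finset.card_product, Nat.card_Icc, Finset.card_range, Nat.add_sub_cancel] at c1 c2 c3
    refine (Finset.card_union_le _ _).trans ?_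
    refine (Nat.add_le_add_right (Finset.card_union_le _ _) _).trans ?_
    calc _ ≤ (x - 2) * (y - 1) * 2 + x * j + y * k := by gcongr
      _ = _ := by ring
  intro A B hA hB hlt
  by_contra! hno
  simp only [Finset.mem_union, Finset.mem_biUnion] at hno
  set U := Finset.univ.filter (fun i => f i ∈ A ∧ g i ∈ B) with hU
  have memU : ∀ i, i ∈ U ↔ f i ∈ A ∧ g i ∈ B := fun i => by simp [hU]
  have bV : ∀ s, s < x → (((V s).filter (fun i => f i ∈ A ∧ g i ∈ B)).card : ℝ) ≤ ε₁ * (n * y) := by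
    intro s hs
    by_contra! hc
    have : ε₁ * ((V s).card : ℝ) ≤ ε₁ * (n * y) :=
      mul_le_mul_of_nonneg_left (by exact_mod_cast hV s) h₁.1.1
    obtain ⟨q, hq, hqA, hqB⟩ := hQ₁ s A B hA hB (this.trans_lt hc)
    exact hno q (Or.inl (Or.inr ⟨s, by simpa using hs, hq⟩)) hqA hqB
  have bH : ∀ s, s < y → (((H s).filter (fun i => f i ∈ A ∧ g i ∈ B)).card : ℝ) ≤ ε₂ * (n * x) := by
    intro s hs
    by_contra! hc
    have : ε₂ * ((H s).card : ℝ) ≤ ε₂ * (n * x) :=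
      mul_le_mul_of_nonneg_left (by exact_mod_cast hH s) h₂.1.1
    obtain ⟨q, hq, hqA, hqB⟩ := hQ₂ s A B hA hB (this.trans_lt hc)
    exact hno q (Or.inr ⟨s, by simpa using hs, hq⟩) hqA hqB
  have hε : 0 ≤ ε := by
    have h0 := h₂.1.1
    have : (0 : ℝ) < y := by positivity
    by_contra! hc
    nlinarith
  have hne : U.Nonempty := by
    rw [← Finset.card_pos]
    have : (0 : ℝ) ≤ ε * (n * (x * y)) := by positivity
    exact_mod_cast this.trans_lt hlt
  -- a point strictly between the extreme vertical slabs
  obtain ⟨a, ha, ha'⟩ := U.exists_min_image f hne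
  obtain ⟨b, hb, hb'⟩ := U.exists_max_image f hne
  have hp : ∃ p ∈ U, (f p : ℕ) / (n * y) ≠ (f a : ℕ) / (n * y) ∧
      (f p : ℕ) / (n * y) ≠ (f b : ℕ) / (n * y) := by
    by_contra! hc
    have hsub : U ⊆ (V ((f a : ℕ) / (n * y))).filter (fun i => f i ∈ A ∧ g i ∈ B) ∪
        (V ((f b : ℕ) / (n * y))).filter (fun i => f i ∈ A ∧ g i ∈ B) := by
      intro i hi
      have hi2 := (memU i).1 hi
      have := hc i hi
      simp only [V, Finset.mem_union, Finset.mem_filter, Finset.mem_univ, true_and]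
      tauto
    have h3 := (Finset.card_le_card hsub).trans (Finset.card_union_le _ _)
    have h3' : (U.card : ℝ) ≤ _ := Nat.cast_le.mpr h3
    push_cast at h3'
    have h4 := bV _ (hfx a)
    have h5 := bV _ (hfx b)
    have h6 : 2 * ε₁ * (n * y) ≤ ε * x * (n * y) :=
      mul_le_mul_of_nonneg_right he₁ (by positivity)
    nlinarith
  obtain ⟨p, hpU, hpa, hpb⟩ := hp
  -- two points in different horizontal slabs
  have huv : ∃ u ∈ U, ∃ v ∈ U, (g u : ℕ) / (n * x) < (g v : ℕ) / (n * x) := by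
    by_contra! hc
    have hsub : U ⊆ (H ((g p : ℕ) / (n * x))).filter (fun i => f i ∈ A ∧ g i ∈ B) := by
      intro i hi
      have hi2 := (memU i).1 hi
      simp only [H, Finset.mem_filter, Finset.mem_univ, true_and]
      exact ⟨le_antisymm (hc p hpU i hi) (hc i hi p hpU), hi2⟩
    have h3' : (U.card : ℝ) ≤ _ := Nat.cast_le.mpr (Finset.card_le_card hsub)
    have h4 := bH _ (hgy p)
    have h6 : ε₂ * (n * x) ≤ ε * y * (n * x) :=
      mul_le_mul_of_nonneg_right he₂ (by positivity)
    nlinarith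
  obtain ⟨u, hu, v, hv, huv⟩ := huv
  have lap : (f a : ℕ) / (n * y) < (f p : ℕ) / (n * y) :=
    lt_of_le_of_ne (Nat.div_le_div_right (ha' p hpU)) hpa.symm
  have lpb : (f p : ℕ) / (n * y) < (f b : ℕ) / (n * y) :=
    lt_of_le_of_ne (Nat.div_le_div_right (hb' p hpU)) hpb
  have hbx := hfx b
  have hvy := hgy v
  have hst : ((f p : ℕ) / (n * y), (g v : ℕ) / (n * x)) ∈
      Finset.Icc 1 (x - 2) ×ˢ Finset.Icc 1 (y - 1) := by
    simp only [Finset.mem_product, Finset.mem_Icc]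
    have z1 := (Nat.zero_le _).trans_lt lap
    have z2 := (Nat.zero_le _).trans_lt huv
    exact ⟨⟨z1, by omega⟩, z2, by omega⟩
  have hpV : p ∈ V ((f p : ℕ) / (n * y)) := by simp [V]
  have hWp := hW ((f p : ℕ) / (n * y), (g v : ℕ) / (n * x)) p hpV
  have inA : ∀ q ∈ V ((f p : ℕ) / (n * y)), f q ∈ A := by
    intro q hq
    simp only [V, Finset.mem_filter, Finset.mem_univ, true_and] at hq
    refine hA.out ((memU a).1 ha).1 ((memU b).1 hb).1 ⟨?_, ?_⟩
    · by_contra! hc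
      have := Nat.div_le_div_right (c := n * y) (Fin.lt_def.mp hc).le
      omega
    · by_contra! hc
      have := Nat.div_le_div_right (c := n * y) (Fin.lt_def.mp hc).le
      omega
  have huL : (g u : ℕ) < (g v : ℕ) / (n * x) * (n * x) := (Nat.div_lt_iff_lt_mul hnx).mp huv
  have hvL : (g v : ℕ) / (n * x) * (n * x) ≤ (g v : ℕ) := Nat.div_mul_le_self _ _
  rcases le_or_gt ((g v : ℕ) / (n * x) * (n * x)) (g p : ℕ) with hL | hL
  · obtain ⟨q, hqW, hqV, hq1, hq2⟩ := hWp.1 hL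
    refine hno q (Or.inl (Or.inl ⟨_, hst, hqW⟩)) (inA q hqV) ?_
    exact hB.out ((memU u).1 hu).2 ((memU p).1 hpU).2 ⟨Fin.le_def.mpr (huL.le.trans hq1), hq2⟩
  · obtain ⟨q, hqW, hqV, hq1, hq2⟩ := hWp.2 hL
    refine hno q (Or.inl (Or.inl ⟨_, hst, hqW⟩)) (inA q hqV) ?_
    exact hB.out ((memU p).1 hpU).2 ((memU v).1 hv).2 ⟨hq2, Fin.le_def.mpr (hq1.le.trans hvL)⟩

/-- Ranks refining a real-valued function. -/
lemma exists_rank {ι : Type} [Fintype ι] {M : ℕ} (hM : Fintype.card ι = M) (h : ι → ℝ) :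
    ∃ f : ι ≃ Fin M, Monotone (h ∘ f.symm) := by
  let e := Fintype.equivFinOfCardEq hM
  refine ⟨e.trans (Tuple.sort (h ∘ e.symm)).symm, ?_⟩
  exact Tuple.monotone_sort (h ∘ e.symm)

open Classical in
lemma grid_net (x y j k : ℕ) (hx : 2 ≤ x) (hy : 2 ≤ y)
    (ε ε₁ ε₂ : ℝ) (h₁ : RGood j ε₁) (h₂ : RGood k ε₂)
    (he₁ : 2 * ε₁ ≤ ε * x) (he₂ : ε₂ ≤ ε * y) (P : Finset (EuclideanSpace ℝ (Fin 2))) :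
    ∃ Q : Finset (EuclideanSpace ℝ (Fin 2)),
      Q.card ≤ 2 * (x - 2) * (y - 1) + j * x + k * y ∧ IsRectNet P Q ε := by
  rcases P.eq_empty_or_nonempty with rfl | hP
  · exact ⟨∅, by simp, by simp, fun R _ h => by simp at h⟩
  have hM : Fintype.card (Fin P.card × Fin (x * y)) = P.card * (x * y) := by simp
  let π : Fin P.card × Fin (x * y) → EuclideanSpace ℝ (Fin 2) := fun i => P.equivFin.symm i.1
  obtain ⟨f, hf⟩ := exists_rank hM (fun i => π i 0)
  obtain ⟨g, hg⟩ := exists_rank hM (fun i => π i 1)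
  obtain ⟨T, hTc, hT⟩ := grid_core x y j k P.card hx hy hP.card_pos ε ε₁ ε₂ h₁ h₂ he₁ he₂ f g
    f.injective g.injective
  refine ⟨T.image π, Finset.card_image_le.trans hTc, ?_, ?_⟩
  · intro z hz
    obtain ⟨i, _, rfl⟩ := Finset.mem_image.mp hz
    exact (P.equivFin.symm i.1).2
  rintro R ⟨a, b, c, d, rfl⟩ hlt
  have key := hT ((fun i => π i 0) ∘ f.symm ⁻¹' Set.Icc a b)
    ((fun i => π i 1) ∘ g.symm ⁻¹' Set.Icc c d)
    (Set.ordConnected_Icc.preimage_mono hf) (Set.ordConnected_Icc.preimage_mono hg) ?_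
  · obtain ⟨q, hq, hqA, hqB⟩ := key
    simp only [Set.mem_preimage, Function.comp_apply, Equiv.symm_apply_apply, Set.mem_Icc] at hqA hqB
    exact ⟨π q, Finset.mem_image_of_mem _ hq, hqA.1, hqA.2, hqB.1, hqB.2⟩
  · have hxy : (0 : ℝ) < x * y := by positivity
    simp only [Set.mem_preimage, Function.comp_apply, Equiv.symm_apply_apply, Set.mem_Icc]
    set R : Set (EuclideanSpace ℝ (Fin 2)) := {z | a ≤ z 0 ∧ z 0 ≤ b ∧ c ≤ z 1 ∧ z 1 ≤ d} with hR
    have h1 : (Finset.univ.filter (fun i : Fin P.card × Fin (x * y) =>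
        (a ≤ π i 0 ∧ π i 0 ≤ b) ∧ c ≤ π i 1 ∧ π i 1 ≤ d)) =
        (Finset.univ.filter (fun i : Fin P.card => (P.equivFin.symm i : EuclideanSpace ℝ (Fin 2)) ∈ R))
          ×ˢ Finset.univ := by
      ext i
      simp [π, hR, and_assoc]
    have h2 : (R ∩ ↑P).ncard =
        (Finset.univ.filter (fun i : Fin P.card =>
          (P.equivFin.symm i : EuclideanSpace ℝ (Fin 2)) ∈ R)).card := by
      rw [← Finset.card_image_of_injective _
        (Subtype.val_injective.comp P.equivFin.symm.injective), ← Set.ncard_coe_finset]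
      congr 1
      ext z
      simp only [Set.mem_inter_iff, Finset.mem_coe, Finset.mem_image, Finset.mem_filter,
        Finset.mem_univ, true_and, Function.comp_apply]
      constructor
      · rintro ⟨hz, hzP⟩
        exact ⟨P.equivFin ⟨z, hzP⟩, by simpa using hz, by simp⟩
      · rintro ⟨i, hi, rfl⟩
        exact ⟨hi, (P.equivFin.symm i).2⟩
    rw [h1, Finset.card_product, ← h2]
    simp only [Finset.card_univ, Fintype.card_fin]
    push_cast
    rw [← mul_assoc]
    exact mul_lt_mul_of_pos_right hlt hxy

lemma rGood_one (i : ℕ) : RGood i 1 := by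
  refine ⟨by simp, fun P => ⟨∅, by simp, by simp, fun R _ h => ?_⟩⟩
  exfalso
  have := Set.ncard_le_ncard (Set.inter_subset_right : R ∩ ↑P ⊆ ↑P) (Finset.finite_toSet P)
  rw [Set.ncard_coe_finset] at this
  rw [one_mul] at h
  exact absurd (Nat.cast_lt.mp h) (not_lt.mpr this)

lemma epsR_le {i : ℕ} {ε : ℝ} (h : RGood i ε) : epsR i ≤ ε :=
  csInf_le ⟨0, fun _ h => h.1.1⟩ h

lemma epsR_nonneg (i : ℕ) : 0 ≤ epsR i := Real.sInf_nonneg fun _ h => h.1.1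

lemma exists_rGood {i : ℕ} {c : ℝ} (h : epsR i < c) : ∃ ε, RGood i ε ∧ ε < c :=
  exists_lt_of_csInf_lt ⟨1, rGood_one i⟩ h

/-- Grid recursive upper bound:
`ε_{2(x-2)(y-1)+jx+ky}^R ≤ max(2 ε_j^R / x, ε_k^R / y)` for `x, y ≥ 2`, `j, k ≥ 0`. -/
theorem epsR_recursive_grid (x y j k : ℕ) (hx : 2 ≤ x) (hy : 2 ≤ y) :
    epsR (2 * (x - 2) * (y - 1) + j * x + k * y) ≤
      max (2 * epsR j / (x : ℝ)) (epsR k / (y : ℝ)) := by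
  refine le_of_forall_gt_imp_ge_of_dense fun ε hε => ?_
  rcases le_or_gt 1 ε with h1 | h1
  · exact (epsR_le (rGood_one _)).trans h1
  have hx0 : (0 : ℝ) < x := by positivity
  have hy0 : (0 : ℝ) < y := by positivity
  obtain ⟨hj, hk⟩ := max_lt_iff.mp hε
  have hε0 : 0 ≤ ε := (div_nonneg (epsR_nonneg k) hy0.le).trans hk.le
  rw [div_lt_iff₀ hx0] at hj
  rw [div_lt_iff₀ hy0] at hk
  obtain ⟨ε₁, g₁, l₁⟩ := exists_rGood (i := j) (c := ε * x / 2) (by linarith)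
  obtain ⟨ε₂, g₂, l₂⟩ := exists_rGood hk
  exact epsR_le ⟨⟨hε0, h1.le⟩, fun P => grid_net x y j k hx hy ε ε₁ ε₂ g₁ g₂ (by linarith) l₂.le P⟩
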